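/- (Zeroth-order term of coboundaries in D_{0,5}.) Let α₀,…,α₆ ∈ ℝ and let b be the 1-cochain with values in D_{0,5} defined by b(X)(f) = Σ_{j=0}^{6} α_j X^(6−j) f^(j). Then for all X, Y ∈ ℝ[x], the zeroth-order part of ∂b(X,Y) (its coefficient of f, i.e. the terms of ∂b(X,Y)(f) involving f undifferentiated) equals −α₀(9X″Y^(5) + 5X‴Y^(4) − 9X^(5)Y″ − 5X^(4)Y‴)·f. -/

import Mathlib

noncomputable section

/-- Polynomials over ℝ, identified with polynomial vector fields / densities on the line. -/
abbrev P : Type := Polynomial ℝ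

/-- Derivative d/dx. -/
def D : P → P := fun f => Polynomial.derivative f

/-- Iterated derivative: `Dk k f = f^(k)`. -/
def Dk (k : ℕ) : P → P := D^[k]

/-- Lie bracket on Vect(1): [X,Y] = XY' - X'Y. -/
def br (X Y : P) : P := X * D Y - D X * Y

/-- Action of the vector field X on λ-densities: `L_X^λ f = X f' + λ X' f`. -/
def Lw (l : ℝ) (X f : P) : P := X * D f + Polynomial.C l * D X * f

/-- Action on operators from F_ν to F_μ: `L_X^{ν,μ}(A) = L_X^μ ∘ A - A ∘ L_X^ν`. -/
def LD (nu mu : ℝ) (X : P) (A : P → P) (f : P) : P := Lw mu X (A f) - A (Lw nu X f)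

/-- 1-cocycle condition with values in D_{ν,μ}. -/
def IsCocycle1 (nu mu : ℝ) (c : P → P → P) : Prop :=
  ∀ X Y f, c (br X Y) f = LD nu mu X (c Y) f - LD nu mu Y (c X) f

/-- 2-cocycle condition with values in D_{ν,μ}. -/
def IsCocycle2 (nu mu : ℝ) (o : P → P → P → P) : Prop :=
  ∀ X Y Z f,
    LD nu mu X (o Y Z) f - LD nu mu Y (o X Z) f + LD nu mu Z (o X Y) f
      - o (br X Y) Z f + o (br X Z) Y f - o (br Y Z) X f = 0

/-- Cup product of 1-cochains: `[[C₁,C₂]](X,Y) = C₁(X)∘C₂(Y) - C₁(Y)∘C₂(X)`. -/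
def cup (c₁ c₂ : P → P → P) (X Y f : P) : P := c₁ X (c₂ Y f) - c₁ Y (c₂ X f)

/-- Coboundary of a 1-cochain b with values in D_{ν,μ}. -/
def cob (nu mu : ℝ) (b : P → P → P) (X Y f : P) : P :=
  LD nu mu X (b Y) f - LD nu mu Y (b X) f - b (br X Y) f


theorem D_add' (f g : P) : D (f + g) = D f + D g := by simp [D]
theorem D_sub' (f g : P) : D (f - g) = D f - D g := by simp [D]
theorem D_mul' (f g : P) : D (f * g) = D f * g + f * D g := by simp [D]
theorem D_C' (r : ℝ) : D (Polynomial.C r) = 0 := by simp [D]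
theorem D_one' : D 1 = 0 := by simp [D]
theorem D_zero' : D 0 = 0 := by simp [D]
theorem Dk_zero' (f : P) : Dk 0 f = f := rfl
theorem Dk_succ' (k : ℕ) (f : P) : Dk (k + 1) f = D (Dk k f) :=
  Function.iterate_succ_apply' D k f
theorem Dk_z (k : ℕ) : Dk k 0 = 0 := by
  induction k with
  | zero => rfl
  | succ k ih => rw [Dk_succ', ih, D_zero']
theorem Dk_o (k : ℕ) : Dk (k + 1) 1 = 0 := by
  induction k with
  | zero => rw [Dk_succ', Dk_zero', D_one']
  | succ k ih => rw [Dk_succ', ih, D_zero']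

theorem cochain_one (a : Fin 7 → ℝ) (X : P) :
    (∑ j : Fin 7, Polynomial.C (a j) * Dk (6 - (j : ℕ)) X * Dk (j : ℕ) 1)
      = Polynomial.C (a 0) * Dk 6 X := by
  rw [Fin.sum_univ_succ, Finset.sum_eq_zero]
  · simp [Dk_zero']
  · intro i _
    rw [Fin.val_succ, Dk_o, mul_zero]

theorem Lw_zero_one (X : P) : Lw 0 X 1 = 0 := by
  rw [Lw, D_one', Polynomial.C_0]; ring

theorem Dk_br (X Y : P) : Dk 6 (br X Y) =
    X * Dk 7 Y + 5 * Dk 1 X * Dk 6 Y + 9 * Dk 2 X * Dk 5 Y + 5 * Dk 3 X * Dk 4 Y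
    - 5 * Dk 4 X * Dk 3 Y - 9 * Dk 5 X * Dk 2 Y - 5 * Dk 6 X * Dk 1 Y - Dk 7 X * Y := by
  simp only [Dk_succ', Dk_zero', br, D_add', D_sub', D_mul']
  ring

/-- the zeroth-order term (coefficient of `f`, obtained by evaluating the
operator at the constant polynomial 1) of a coboundary in `D_{0,5}`. -/
theorem coboundary_zeroth_order_term (a : Fin 7 → ℝ) :
    ∀ X Y : P,
      cob 0 5
        (fun X f => ∑ j : Fin 7,
          Polynomial.C (a j) * Dk (6 - (j : ℕ)) X * Dk (j : ℕ) f) X Y 1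
      = Polynomial.C (-(a 0)) *
          (9 * Dk 2 X * Dk 5 Y + 5 * Dk 3 X * Dk 4 Y
            - 9 * Dk 5 X * Dk 2 Y - 5 * Dk 4 X * Dk 3 Y) := by
  intro X Y
  have h5 : (Polynomial.C (5:ℝ) : P) = 5 := map_ofNat Polynomial.C 5
  have h7 : ∀ Z : P, Dk 7 Z = D (Dk 6 Z) := Dk_succ' 6
  have h1 : ∀ Z : P, Dk 1 Z = D Z := fun _ => rfl
  simp only [cob, LD, cochain_one, Lw_zero_one, Dk_z, mul_zero, Finset.sum_const_zero, Dk_br]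
  simp only [Lw, D_mul', D_C', h5, h7, h1, Polynomial.C_neg]
  ring
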